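/- Let 0 < c < c₀, where c₀ ∈ (1,∞) is the unique zero of ψ(t) = (t+1)ln(t+1) + (t−1)ln(t−1) − 2t in (1,∞), let M > 0, and let r : ℝ → (0,∞) satisfy r(x) ≤ c|x| + M for all x ∈ ℝ. Then every lower semicontinuous function f : ℝ → (−∞,∞] with f > −∞ everywhere which satisfies liminf_{|x|→∞} f(x)/ln|x| > −∞ and is (λ,r)-supermedian is constant. -/

import Mathlib

open Filter MeasureTheory

/-- The interval mean `λ_{x,ρ}(f) = (1/(2ρ)) ∫_{x-ρ}^{x+ρ} f(s) ds` of an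
`EReal`-valued function `f` on `ℝ`, computed as the supremum of the means of the
truncations `min (f, n)`. -/
noncomputable def intervalMeanE (f : ℝ → EReal) (x ρ : ℝ) : EReal :=
  ⨆ n : ℕ, (((1 / (2 * ρ)) * ∫ s in (x - ρ)..(x + ρ),
      (f s ⊓ (n : EReal)).toReal : ℝ) : EReal)

/-- `ψ(t) = (t+1)ln(t+1) + (t-1)ln(t-1) - 2t`. -/
noncomputable def psi (t : ℝ) : ℝ :=
  (t + 1) * Real.log (t + 1) + (t - 1) * Real.log (t - 1) - 2 * t


lemma aux_psi_neg (c₀ c : ℝ) (hc₀1 : 1 < c₀) (hc₀ : psi c₀ = 0) (h1 : 1 < c) (hc : c < c₀) :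
    psi c < 0 := by
  have hlog2 : Real.log 2 < 1 := by
    have := Real.log_two_lt_d9; linarith
  have hconv := Real.convexOn_mul_log
  set a : ℝ := (c₀ - c) / (c₀ - 1) with ha
  set b : ℝ := (c - 1) / (c₀ - 1) with hb
  have hd : 0 < c₀ - 1 := by linarith
  have ha0 : 0 < a := div_pos (by linarith) hd
  have hb0 : 0 < b := div_pos (by linarith) hd
  have hab : a + b = 1 := by rw [ha, hb]; field_simp; ring
  have hcc : a * 1 + b * c₀ = c := by rw [ha, hb]; field_simp; ring
  have e1 := hconv.2 (x := 2) (y := c₀ + 1) (by simp) (by simp; linarith) ha0.le hb0.le hab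
  have e2 := hconv.2 (x := 0) (y := c₀ - 1) (by simp) (by simp; linarith) ha0.le hb0.le hab
  simp only [smul_eq_mul] at e1 e2
  have f1 : a * 2 + b * (c₀ + 1) = c + 1 := by linarith
  have f2 : a * 0 + b * (c₀ - 1) = c - 1 := by linarith
  rw [f1] at e1
  rw [f2] at e2
  unfold psi at hc₀ ⊢
  have : b * ((c₀ + 1) * Real.log (c₀ + 1) + (c₀ - 1) * Real.log (c₀ - 1) - 2 * c₀) = 0 := by
    rw [hc₀]; simp
  nlinarith

lemma aux_delta (c : ℝ) (h1 : 1 < c) (hpsi : psi c < 0) :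
    ∃ δ : ℝ, 0 < δ ∧ δ < 1 ∧ (1 + c) ^ (1 + δ) + (c - 1) ^ (1 + δ) - 2 * c * (1 + δ) < 0 := by
  have hd : HasDerivAt (fun δ : ℝ => (1 + c) ^ (1 + δ) + (c - 1) ^ (1 + δ) - 2 * c * (1 + δ))
      (psi c) 0 := by
    have hid : HasDerivAt (fun δ : ℝ => 1 + δ) 1 0 := (hasDerivAt_id 0).const_add 1
    have a1 := hid.const_rpow (a := 1 + c) (by linarith)
    have a2 := hid.const_rpow (a := c - 1) (by linarith)
    have a3 := hid.const_mul (2 * c)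
    refine ((a1.add a2).sub a3).congr_deriv ?_
    unfold psi
    simp
    rw [add_comm c 1]
    ring
  have ht := hd.tendsto_slope
  have ht2 : Tendsto (slope (fun δ : ℝ => (1 + c) ^ (1 + δ) + (c - 1) ^ (1 + δ) - 2 * c * (1 + δ)) 0)
      (nhdsWithin 0 (Set.Ioi 0)) (nhds (psi c)) :=
    ht.mono_left (nhdsWithin_mono _ (fun x hx => ne_of_gt hx))
  have h3 := ht2.eventually (gt_mem_nhds hpsi)
  have h4 : ∀ᶠ x : ℝ in nhdsWithin 0 (Set.Ioi 0), x ∈ Set.Ioo (0:ℝ) 1 :=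
    Ioo_mem_nhdsGT one_pos
  obtain ⟨δ, hs, hδ⟩ := (h3.and h4).exists
  refine ⟨δ, hδ.1, hδ.2, ?_⟩
  rw [slope_def_field] at hs
  simp only [sub_zero, add_zero, Real.rpow_one] at hs
  have := (div_lt_iff₀ hδ.1).1 hs
  linarith

lemma aux_int_one (δ c : ℝ) (h0 : 0 < δ) (hδ1 : δ < 1) (h1 : 1 < c)
    (hneg : (1 + c) ^ (1 + δ) + (c - 1) ^ (1 + δ) - 2 * c * (1 + δ) < 0)
    (t : ℝ) (ht0 : 0 < t) (htc : t ≤ c) :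
    ∫ s in (1 - t)..(1 + t), |s| ^ δ < 2 * t := by
  have hcont : Continuous (fun s : ℝ => |s| ^ δ) :=
    continuous_abs.rpow_const (fun _ => Or.inr h0.le)
  rcases le_or_gt t 1 with ht | ht
  · have hb : ∀ s : ℝ, 0 ≤ s → |s| ^ δ ≤ 1 + δ * (s - 1) := by
      intro s hs
      have := rpow_one_add_le_one_add_mul_self (s := s - 1) (by linarith) h0.le hδ1.le
      rw [abs_of_nonneg hs]
      simpa using this
    have hlt : |1 + t| ^ δ < 1 + δ * ((1 + t) - 1) := by
      have := rpow_one_add_lt_one_add_mul_self (s := t) (by linarith) ht0.ne' h0 hδ1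
      rw [abs_of_pos (by linarith)]
      simpa using this
    have key : ∫ s in (1 - t)..(1 + t), |s| ^ δ < ∫ s in (1 - t)..(1 + t), (1 + δ * (s - 1)) := by
      apply intervalIntegral.integral_lt_integral_of_continuousOn_of_le_of_exists_lt
      · linarith
      · exact hcont.continuousOn
      · fun_prop
      · intro s hs
        exact hb s (by linarith [hs.1])
      · exact ⟨1 + t, ⟨by linarith, le_rfl⟩, hlt⟩
    have e : ∫ s in (1 - t)..(1 + t), (1 + δ * (s - 1)) = 2 * t := by
      have : ∀ s ∈ Set.uIcc (1 - t) (1 + t),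
          HasDerivAt (fun s : ℝ => s + δ * (s - 1) ^ 2 / 2) (1 + δ * (s - 1)) s := by
        intro s _
        have := (hasDerivAt_id s).add
          (((((hasDerivAt_id s).sub_const 1).pow 2).const_mul δ).div_const 2)
        refine this.congr_deriv ?_
        simp
        ring
      rw [intervalIntegral.integral_eq_sub_of_hasDerivAt this
        (Continuous.intervalIntegrable (by fun_prop) _ _)]
      ring
    linarith
  · have hp : -1 < δ := by linarith
    have hI : ∀ a b, IntervalIntegrable (fun s : ℝ => |s| ^ δ) volume a b :=
      fun a b => hcont.intervalIntegrable a b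
    have e0 : ∀ b : ℝ, 0 ≤ b → ∫ s in (0:ℝ)..b, |s| ^ δ = b ^ (1 + δ) / (1 + δ) := by
      intro b hb
      have : ∫ s in (0:ℝ)..b, |s| ^ δ = ∫ s in (0:ℝ)..b, s ^ δ := by
        apply intervalIntegral.integral_congr
        intro s hs
        rw [Set.uIcc_of_le hb] at hs
        simp only [abs_of_nonneg hs.1]
      rw [this, integral_rpow (Or.inl hp), Real.zero_rpow (by linarith), add_comm δ 1]
      simp
    have e1 : ∫ s in (1 - t)..(0:ℝ), |s| ^ δ = ∫ s in (0:ℝ)..(t - 1), |s| ^ δ := by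
      have := intervalIntegral.integral_comp_neg (a := 0) (b := t - 1) (fun s : ℝ => |s| ^ δ)
      simp only [abs_neg] at this
      rw [this]
      simp
    rw [← intervalIntegral.integral_add_adjacent_intervals (hI (1 - t) 0) (hI 0 (1 + t)), e1,
      e0 _ (by linarith), e0 _ (by linarith), ← add_div, div_lt_iff₀ (by linarith)]
    have hconv := convexOn_rpow (p := 1 + δ) (by linarith)
    have h2 : (2:ℝ) ^ (1 + δ) < 2 * (1 + δ) := by
      have := rpow_one_add_lt_one_add_mul_self (s := 1) (by norm_num) one_ne_zero h0 hδ1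
      rw [Real.rpow_add two_pos]
      norm_num at this ⊢
      linarith
    set a : ℝ := (c - t) / (c - 1) with ha
    set b : ℝ := (t - 1) / (c - 1) with hb
    have hd : 0 < c - 1 := by linarith
    have ha0 : 0 ≤ a := div_nonneg (by linarith) hd.le
    have hb0 : 0 < b := div_pos (by linarith) hd
    have hab : a + b = 1 := by rw [ha, hb]; field_simp; ring
    have hcc : a * 1 + b * c = t := by rw [ha, hb]; field_simp; ring
    have e1 := hconv.2 (x := 2) (y := 1 + c) (by simp) (by simp; linarith) ha0 hb0.le hab
    have e2 := hconv.2 (x := 0) (y := c - 1) (by simp) (by simp; linarith) ha0 hb0.le hab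
    simp only [smul_eq_mul] at e1 e2
    have f1 : a * 2 + b * (1 + c) = 1 + t := by linarith
    have f2 : a * 0 + b * (c - 1) = t - 1 := by linarith
    rw [f1] at e1
    rw [f2, Real.zero_rpow (by linarith)] at e2
    have g1 := mul_neg_of_pos_of_neg hb0 hneg
    have g2 := mul_le_mul_of_nonneg_left h2.le ha0
    have g3 : 2 * t * (1 + δ) = a * (2 * (1 + δ)) + b * (2 * c * (1 + δ)) := by
      rw [← hcc]; ring
    rw [g3]
    linarith

lemma aux_int (δ c : ℝ) (h0 : 0 < δ) (hδ1 : δ < 1) (h1 : 1 < c)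
    (hneg : (1 + c) ^ (1 + δ) + (c - 1) ^ (1 + δ) - 2 * c * (1 + δ) < 0)
    (x ρ : ℝ) (hρ : 0 < ρ) (hx : x ≠ 0) (hρc : ρ ≤ c * |x|) :
    ∫ s in (x - ρ)..(x + ρ), |s| ^ δ < 2 * ρ * |x| ^ δ := by
  have hpos : ∀ x : ℝ, 0 < x → ρ ≤ c * x →
      ∫ s in (x - ρ)..(x + ρ), |s| ^ δ < 2 * ρ * |x| ^ δ := by
    intro x hx hρc
    have h := aux_int_one δ c h0 hδ1 h1 hneg (ρ / x) (div_pos hρ hx) ((div_le_iff₀ hx).2 hρc)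
    have e := intervalIntegral.mul_integral_comp_mul_left (a := 1 - ρ / x) (b := 1 + ρ / x)
      (f := fun s : ℝ => |s| ^ δ) x
    have b1 : x * (1 - ρ / x) = x - ρ := by field_simp
    have b2 : x * (1 + ρ / x) = x + ρ := by field_simp
    rw [b1, b2] at e
    rw [← e]
    have : ∀ s : ℝ, |x * s| ^ δ = |x| ^ δ * |s| ^ δ := by
      intro s
      rw [abs_mul, Real.mul_rpow (abs_nonneg _) (abs_nonneg _)]
    simp only [this]
    rw [intervalIntegral.integral_const_mul]
    have hp : 0 < x * |x| ^ δ := mul_pos hx (Real.rpow_pos_of_pos (abs_pos.2 hx.ne') _)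
    have := mul_lt_mul_of_pos_left h hp
    have e3 : x * |x| ^ δ * (2 * (ρ / x)) = 2 * ρ * |x| ^ δ := by field_simp
    linarith
  rcases lt_or_gt_of_ne hx with h | h
  · have := hpos (-x) (by linarith) (by rwa [abs_of_neg h] at hρc)
    have e := intervalIntegral.integral_comp_neg (a := x - ρ) (b := x + ρ) (fun s : ℝ => |s| ^ δ)
    simp only [abs_neg] at e this
    rw [e, show -(x + ρ) = -x - ρ by ring, show -(x - ρ) = -x + ρ by ring]
    exact this
  · exact hpos x h (by rwa [abs_of_pos h] at hρc)

lemma aux_med (f : ℝ → EReal) (hf_lsc : LowerSemicontinuous f)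
    (x ρ a : ℝ) (hρ : 0 < ρ) (hfx : f x = (a : EReal)) (hmed : intervalMeanE f x ρ ≤ f x)
    (h : ℝ → ℝ) (hh : Continuous h) (hle : ∀ s, (h s : EReal) ≤ f s) :
    ∫ s in (x - ρ)..(x + ρ), h s ≤ 2 * ρ * a := by
  obtain ⟨B, hB⟩ := (isCompact_Icc (a := x - ρ) (b := x + ρ)).exists_bound_of_continuousOn
    hh.continuousOn
  obtain ⟨n, hn⟩ := exists_nat_ge B
  have hle' : ∀ s ∈ Set.Icc (x - ρ) (x + ρ),
      h s ≤ (f s ⊓ (n : EReal)).toReal ∧ (f s ⊓ (n : EReal)).toReal ≤ n := by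
    intro s hs
    have h1 : (h s : EReal) ≤ f s ⊓ (n : EReal) := by
      refine le_inf (hle s) ?_
      have : h s ≤ (n : ℝ) := le_trans (le_trans (le_abs_self _) (hB s hs)) hn
      exact_mod_cast this
    have h2 : f s ⊓ (n : EReal) ≤ ((n : ℝ) : EReal) := by
      refine le_trans inf_le_right ?_
      simp
    constructor
    · have := EReal.toReal_le_toReal h1 (EReal.coe_ne_bot _)
        (ne_top_of_le_ne_top (EReal.coe_ne_top _) h2)
      simpa using this
    · have := EReal.toReal_le_toReal h2
        (ne_bot_of_le_ne_bot (EReal.coe_ne_bot _) h1) (EReal.coe_ne_top _)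
      rwa [EReal.toReal_coe] at this
  have hmeas : Measurable (fun s => (f s ⊓ (n : EReal)).toReal) :=
    (hf_lsc.measurable.inf measurable_const).ereal_toReal
  have hxx : x - ρ ≤ x + ρ := by linarith
  have hint : IntervalIntegrable (fun s => (f s ⊓ (n : EReal)).toReal) volume (x - ρ) (x + ρ) := by
    rw [intervalIntegrable_iff_integrableOn_Icc_of_le hxx]
    refine Measure.integrableOn_of_bounded (M := B + n) (by simp) hmeas.aestronglyMeasurable ?_
    refine (ae_restrict_mem measurableSet_Icc).mono ?_
    intro s hs
    obtain ⟨h1, h2⟩ := hle' s hs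
    have h3 := hB s hs
    rw [Real.norm_eq_abs] at h3 ⊢
    have h4 := abs_le.1 h3
    have : (0:ℝ) ≤ n := Nat.cast_nonneg n
    have h5 : 0 ≤ B := le_trans (abs_nonneg _) h3
    rw [abs_le]
    constructor <;> linarith [h4.1, h4.2]
  have hm : ∫ s in (x - ρ)..(x + ρ), h s ≤
      ∫ s in (x - ρ)..(x + ρ), (f s ⊓ (n : EReal)).toReal :=
    intervalIntegral.integral_mono_on hxx (hh.intervalIntegrable _ _) hint
      (fun s hs => (hle' s hs).1)
  have hm2 : (((1 / (2 * ρ)) * ∫ s in (x - ρ)..(x + ρ),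
      (f s ⊓ (n : EReal)).toReal : ℝ) : EReal) ≤ (a : EReal) := by
    rw [← hfx]
    refine le_trans ?_ hmed
    unfold intervalMeanE
    exact le_iSup (fun n : ℕ => (((1 / (2 * ρ)) * ∫ s in (x - ρ)..(x + ρ),
      (f s ⊓ (n : EReal)).toReal : ℝ) : EReal)) n
  have hm3 := EReal.coe_le_coe_iff.1 hm2
  rw [one_div, inv_mul_le_iff₀ (by linarith)] at hm3
  linarith

/-- A supermedian function attaining its minimum is constant. -/
lemma aux_const (r : ℝ → ℝ) (hr_pos : ∀ x, 0 < r x)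
    (f : ℝ → EReal) (hf_lsc : LowerSemicontinuous f) 
    (hf_med : ∀ x : ℝ, intervalMeanE f x (r x) ≤ f x) (m : ℝ)
    (hm : ∀ x, (m : EReal) ≤ f x) (x₀ : ℝ) (hx₀ : f x₀ = m) :
    ∀ x, f x = m := by
  have hclosed : IsClosed {x | f x = m} := by
    have : {x | f x = m} = f ⁻¹' Set.Iic (m : EReal) := by
      ext x
      exact ⟨fun h => le_of_eq h, fun h => le_antisymm h (hm x)⟩
    rw [this]
    exact hf_lsc.isClosed_preimage _
  have hopen : IsOpen {x | f x = m} := by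
    rw [Metric.isOpen_iff]
    intro x hx
    refine ⟨r x, hr_pos x, ?_⟩
    intro y hy
    by_contra hne
    have hlt : (m : EReal) < f y := lt_of_le_of_ne (hm y) (Ne.symm hne)
    obtain ⟨q, hq1, hq2⟩ := EReal.lt_iff_exists_real_btwn.1 hlt
    have hq1 : m < q := EReal.coe_lt_coe_iff.1 hq1
    obtain ⟨η, hη, hball⟩ := Metric.eventually_nhds_iff.1 (hf_lsc y q hq2)
    let h : ℝ → ℝ := fun s => m + (q - m) * max 0 (1 - |s - y| / η)
    have hh : Continuous h := by fun_prop
    have hmh : ∀ s, m ≤ h s := fun s => by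
      have : 0 ≤ (q - m) * max 0 (1 - |s - y| / η) :=
        mul_nonneg (by linarith) (le_max_left _ _)
      simp only [h]; linarith
    have hle : ∀ s, (h s : EReal) ≤ f s := by
      intro s
      rcases lt_or_ge (|s - y|) η with hs | hs
      · have h1 : f s > q := hball (by rwa [Real.dist_eq])
        refine le_trans ?_ h1.le
        rw [EReal.coe_le_coe_iff]
        have : max 0 (1 - |s - y| / η) ≤ 1 := by
          apply max_le zero_le_one
          have : 0 ≤ |s - y| / η := by positivity
          linarith
        have := mul_le_mul_of_nonneg_left this (by linarith : 0 ≤ q - m)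
        simp only [h]; linarith
      · have : 1 ≤ |s - y| / η := (one_le_div hη).2 hs
        have : max 0 (1 - |s - y| / η) = 0 := max_eq_left (by linarith)
        simp only [h, this]
        simpa using hm s
    have k1 := aux_med f hf_lsc x (r x) m (hr_pos x) hx (hf_med x) h hh hle
    have hρ := hr_pos x
    have k2 : ∫ s in (x - r x)..(x + r x), m < ∫ s in (x - r x)..(x + r x), h s := by
      apply intervalIntegral.integral_lt_integral_of_continuousOn_of_le_of_exists_lt
      · linarith
      · exact continuousOn_const
      · exact hh.continuousOn
      · intro s _; exact hmh s
      · refine ⟨y, ?_, ?_⟩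
        · rw [Metric.mem_ball, Real.dist_eq, abs_lt] at hy
          constructor <;> linarith [hy.1, hy.2]
        · simp [h]; exact hq1
    rw [intervalIntegral.integral_const] at k2
    simp only [smul_eq_mul] at k2
    nlinarith
  have := IsClopen.eq_univ ⟨hclosed, hopen⟩ ⟨x₀, hx₀⟩
  intro x
  have hx : x ∈ {x | f x = m} := this ▸ Set.mem_univ x
  exact hx

/-- Lower bound from the liminf condition. -/
lemma aux_liminf (f : ℝ → EReal)
    (hf_liminf : ⊥ < Filter.liminf
      (fun x : ℝ => f x / ((Real.log |x| : ℝ) : EReal))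
      (Filter.comap (fun x : ℝ => |x|) Filter.atTop)) :
    ∃ K : ℝ, ∃ R : ℝ, ∀ x : ℝ, R ≤ |x| → ((K * Real.log |x| : ℝ) : EReal) ≤ f x := by
  obtain ⟨K, _, hK⟩ := EReal.lt_iff_exists_real_btwn.1 hf_liminf
  have h1 := Filter.eventually_lt_of_lt_liminf hK
  rw [Filter.eventually_comap] at h1
  obtain ⟨R, hR⟩ := Filter.eventually_atTop.1 h1
  refine ⟨K, max R 2, ?_⟩
  intro x hx
  have h2 := hR |x| (le_trans (le_max_left _ _) hx) x rfl
  have hl : 0 < Real.log |x| := Real.log_pos (by linarith [le_max_right R 2])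
  have h3 := (EReal.le_div_iff_mul_le (by exact_mod_cast hl) (EReal.coe_ne_top _)).1 h2.le
  rw [EReal.coe_mul]
  exact h3

lemma aux_tendsto (K ε δ : ℝ) (hε : 0 < ε) (hδ : 0 < δ) :
    Tendsto (fun y : ℝ => K * Real.log y + ε * y ^ δ) atTop atTop := by
  have h1 : Tendsto (fun y : ℝ => Real.log y / y ^ δ) atTop (nhds 0) :=
    (isLittleO_log_rpow_atTop hδ).tendsto_div_nhds_zero
  have h2 : Tendsto (fun y : ℝ => K * (Real.log y / y ^ δ) + ε) atTop (nhds ε) := by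
    simpa using (h1.const_mul K).add_const ε
  have h3 := h2.pos_mul_atTop hε (tendsto_rpow_atTop hδ)
  refine h3.congr' ?_
  filter_upwards [eventually_gt_atTop 0] with y hy
  have : y ^ δ ≠ 0 := (Real.rpow_pos_of_pos hy δ).ne'
  field_simp

theorem stmt19 (c₀ c M : ℝ) (hc₀1 : 1 < c₀) (hc₀ : psi c₀ = 0)
    (hc0 : 0 < c) (hc : c < c₀) (hM : 0 < M)
    (r : ℝ → ℝ) (hr_pos : ∀ x, 0 < r x) (hr : ∀ x : ℝ, r x ≤ c * |x| + M)
    (f : ℝ → EReal) (hf_lsc : LowerSemicontinuous f) (hf_bot : ∀ x, f x ≠ ⊥)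
    (hf_liminf : ⊥ < Filter.liminf
      (fun x : ℝ => f x / ((Real.log |x| : ℝ) : EReal))
      (Filter.comap (fun x : ℝ => |x|) Filter.atTop))
    (hf_med : ∀ x : ℝ, intervalMeanE f x (r x) ≤ f x) :
    ∃ C : EReal, ∀ x, f x = C := by
  by_cases htop : ∀ x, f x = ⊤
  · exact ⟨⊤, htop⟩
  push Not at htop
  obtain ⟨x₀, hx₀⟩ := htop
  obtain ⟨c', hc'1, hc'2⟩ := exists_between (max_lt hc hc₀1)
  have hcc' : c < c' := lt_of_le_of_lt (le_max_left _ _) hc'1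
  have h1c' : 1 < c' := lt_of_le_of_lt (le_max_right _ _) hc'1
  obtain ⟨δ, hδ0, hδ1, hneg⟩ := aux_delta c' h1c' (aux_psi_neg c₀ c' hc₀1 hc₀ h1c' hc'2)
  obtain ⟨K, R₁, hK⟩ := aux_liminf f hf_liminf
  set R : ℝ := M / (c' - c) with hR
  have hR0 : 0 < R := div_pos hM (by linarith)
  have hWc : Continuous (fun s : ℝ => |s| ^ δ) :=
    continuous_abs.rpow_const (fun _ => Or.inr hδ0.le)
  -- minimum of the perturbed function
  have hmin : ∀ ε : ℝ, 0 < ε → ∃ z ∈ Set.Icc (-R) R, ∀ x,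
      f z + ((ε * |z| ^ δ : ℝ) : EReal) ≤ f x + ((ε * |x| ^ δ : ℝ) : EReal) := by
    intro ε hε
    set g : ℝ → EReal := fun x => f x + ((ε * |x| ^ δ : ℝ) : EReal) with hg
    have hgl : LowerSemicontinuous g := by
      apply hf_lsc.add'
      · exact (continuous_coe_real_ereal.comp (continuous_const.mul hWc)).lowerSemicontinuous
      · intro x
        exact EReal.continuousAt_add (Or.inr (EReal.coe_ne_bot _)) (Or.inr (EReal.coe_ne_top _))
    obtain ⟨a₀, ha₀⟩ : ∃ a₀ : ℝ, f x₀ = a₀ :=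
      ⟨(f x₀).toReal, (EReal.coe_toReal hx₀ (hf_bot x₀)).symm⟩
    obtain ⟨R₂, hR₂⟩ := Filter.eventually_atTop.1
      ((aux_tendsto K ε δ hε hδ0).eventually_ge_atTop (a₀ + ε * |x₀| ^ δ))
    set R₃ := max (max R₁ R₂) |x₀| with hR₃
    obtain ⟨z, hz, hzmin⟩ := (hgl.lowerSemicontinuousOn (Set.Icc (-R₃) R₃)).exists_isMinOn
      ⟨x₀, abs_le.1 (le_max_right _ _)⟩ isCompact_Icc
    have hzg : ∀ x, g z ≤ g x := by
      intro x
      by_cases hx : x ∈ Set.Icc (-R₃) R₃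
      · exact hzmin hx
      · have hx' : R₃ < |x| := by
          by_contra hcon
          exact hx (abs_le.1 (not_lt.1 hcon))
        have h1 : g z ≤ g x₀ := hzmin (a := x₀) (abs_le.1 (le_max_right _ _))
        refine h1.trans ?_
        have h2 := hR₂ |x| (by
          have : R₂ ≤ R₃ := le_trans (le_max_right _ _) (le_max_left _ _)
          linarith)
        have h3 := hK x (by
          have : R₁ ≤ R₃ := le_trans (le_max_left _ _) (le_max_left _ _)
          linarith)
        simp only [hg, ha₀]
        refine le_trans ?_ (add_le_add_left h3 _)
        rw [← EReal.coe_add, ← EReal.coe_add, EReal.coe_le_coe_iff]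
        exact h2
    refine ⟨z, ?_, hzg⟩
    rw [Set.mem_Icc, ← abs_le]
    by_contra hcon
    have hzR : R < |z| := not_le.1 hcon
    have hz0 : z ≠ 0 := abs_pos.1 (hR0.trans hzR)
    have hfz : f z ≠ ⊤ := by
      intro h
      have h1 := hzg x₀
      simp only [hg, h, ha₀, EReal.top_add_coe, ← EReal.coe_add, top_le_iff] at h1
      exact EReal.coe_ne_top _ h1
    obtain ⟨a, ha⟩ : ∃ a : ℝ, f z = a :=
      ⟨(f z).toReal, (EReal.coe_toReal hfz (hf_bot z)).symm⟩
    have hle : ∀ s, ((a + ε * |z| ^ δ - ε * |s| ^ δ : ℝ) : EReal) ≤ f s := by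
      intro s
      have h1 := hzg s
      simp only [hg, ha] at h1
      rw [EReal.coe_sub]
      apply EReal.sub_le_of_le_add
      rwa [EReal.coe_add]
    have hρc : r z ≤ c' * |z| := by
      have h1 := hr z
      have h2 := (div_lt_iff₀ (by linarith : 0 < c' - c)).1 hzR
      linarith
    have k1 := aux_int δ c' hδ0 hδ1 h1c' hneg z (r z) (hr_pos z) hz0 hρc
    have k2 := aux_med f hf_lsc z (r z) a (hr_pos z) ha (hf_med z)
      (fun s => a + ε * |z| ^ δ - ε * |s| ^ δ) (continuous_const.sub (continuous_const.mul hWc)) hle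
    have hW2 : Continuous (fun s : ℝ => ε * |s| ^ δ) := continuous_const.mul hWc
    rw [intervalIntegral.integral_sub (continuous_const.intervalIntegrable _ _)
      (hW2.intervalIntegrable _ _), intervalIntegral.integral_const,
      intervalIntegral.integral_const_mul] at k2
    have k3 := mul_lt_mul_of_pos_left k1 hε
    simp only [smul_eq_mul] at k2
    nlinarith
  obtain ⟨xm, hxm, hxmin⟩ := (hf_lsc.lowerSemicontinuousOn (Set.Icc (-R) R)).exists_isMinOn
      ⟨0, by constructor <;> linarith⟩ isCompact_Icc
  have hbound : ∀ ε : ℝ, 0 < ε → ∀ x, f xm ≤ f x + ((ε * |x| ^ δ : ℝ) : EReal) := by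
    intro ε hε x
    obtain ⟨z, hz, hzz⟩ := hmin ε hε
    refine le_trans ?_ (hzz x)
    have h1 : f xm ≤ f z := hxmin hz
    have h2 : (0 : EReal) ≤ ((ε * |z| ^ δ : ℝ) : EReal) := by
      have : 0 ≤ ε * |z| ^ δ := by positivity
      exact_mod_cast this
    calc f xm ≤ f z := h1
      _ = f z + 0 := by simp
      _ ≤ _ := add_le_add_right h2 _
  have hmtop : f xm ≠ ⊤ := by
    intro h
    have h1 := hbound 1 one_pos x₀
    rw [h, ← EReal.coe_toReal hx₀ (hf_bot x₀), ← EReal.coe_add, top_le_iff] at h1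
    exact EReal.coe_ne_top _ h1
  obtain ⟨m, hm⟩ : ∃ m : ℝ, f xm = m :=
    ⟨(f xm).toReal, (EReal.coe_toReal hmtop (hf_bot xm)).symm⟩
  have hglob : ∀ x, (m : EReal) ≤ f x := by
    intro x
    by_cases hx : f x = ⊤
    · rw [hx]; exact le_top
    obtain ⟨a, ha⟩ : ∃ a : ℝ, f x = a :=
      ⟨(f x).toReal, (EReal.coe_toReal hx (hf_bot x)).symm⟩
    rw [ha, EReal.coe_le_coe_iff]
    have hall : ∀ ε : ℝ, 0 < ε → m ≤ a + ε * |x| ^ δ := by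
      intro ε hε
      have := hbound ε hε x
      rw [hm, ha, ← EReal.coe_add, EReal.coe_le_coe_iff] at this
      exact this
    have hw : 0 ≤ |x| ^ δ := by positivity
    apply le_of_forall_pos_le_add
    intro η hη
    have h1 := hall (η / (|x| ^ δ + 1)) (by positivity)
    have h2 : η / (|x| ^ δ + 1) * |x| ^ δ ≤ η := by
      rw [div_mul_eq_mul_div, div_le_iff₀ (by positivity)]
      nlinarith
    linarith
  exact ⟨m, aux_const r hr_pos f hf_lsc hf_med m hglob xm hm⟩
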